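/- Let (Ω, 𝓕, μ) be a probability space and T : Ω → Ω an invertible bimeasurable measure-preserving transformation. Suppose there exist sub-σ-algebras 𝓑 and 𝓒 of 𝓕 such that: (i) 𝓑 and 𝓒 are independent; (ii) 𝓒 is T-invariant, i.e. A ∈ 𝓒 if and only if T^{-1}A ∈ 𝓒; (iii) there is a 𝓑-measurable function g : Ω → {-1,0,1} with μ(g = 1) = μ(g = -1) = a/2 for some 0 < a ≤ 1, such that the family (g∘T^k)_{k∈ℤ} is independent and identically distributed and is independent of 𝓒; (iv) for every ε > 0, every N ∈ ℕ and every d ∈ (0,1) there exists A ∈ 𝓒 with μ(A) = d and μ(A Δ T^{-n}A) < ε d for all integers 1 ≤ n ≤ N. Then for every sequence (a_n)_{n≥0} of positive real numbers decreasing to 0 there exists a measurable function f : Ω → {-1,0,1} whose distribution is non-degenerate (f is not μ-almost surely constant) such that (f∘T^k)_{k≥0} is a strong martingale difference sequence, and there exists a strictly increasing sequence (n_k)_{k≥0} of positive integers such that for every k ≥ 0: μ(S_{n_k}(f) = 0) ≥ a_{n_k} and sup_{x∈ℝ} |F_{n_k}(f,x) − Φ(x)| ≥ a_{n_k}/2.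 -/

import Mathlib

open MeasureTheory ProbabilityTheory Set
open scoped ENNReal

/-- The standard normal distribution function `Φ`. -/
noncomputable def stdNormalCDF (x : ℝ) : ℝ :=
  (Real.sqrt (2 * Real.pi))⁻¹ * ∫ t in Set.Iic x, Real.exp (-t ^ 2 / 2)

/-- The partial sums `S_n(f) = Σ_{k=0}^{n-1} f ∘ T^k`. -/
noncomputable def partialSumMDS {Ω : Type*} (T : Ω → Ω) (f : Ω → ℝ) (n : ℕ) (ω : Ω) : ℝ :=
  ∑ k ∈ Finset.range n, f (T^[k] ω)

/-- `F_n(f,x) = μ(S_n(f) ≤ x σ √n)` where `σ² = ∫ f² dμ`. -/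
noncomputable def Fdist {Ω : Type*} [MeasurableSpace Ω] (μ : Measure Ω) (T : Ω → Ω)
    (f : Ω → ℝ) (n : ℕ) (x : ℝ) : ℝ :=
  (μ {ω | partialSumMDS T f n ω ≤ x * Real.sqrt (∫ ω, f ω ^ 2 ∂μ) * Real.sqrt n}).toReal

/-- `(f∘T^k)_{k≥0}` is a strong martingale difference sequence:
`E(f∘T^k | σ(f∘T^j : j ≥ 0, j ≠ k)) = 0` a.s. for every `k`. -/
def IsStrongMDS {Ω : Type*} [MeasurableSpace Ω] (μ : Measure Ω) (T : Ω → Ω)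
    (f : Ω → ℝ) : Prop :=
  ∀ k : ℕ,
    μ[(fun ω => f (T^[k] ω)) |
      ⨆ j ∈ {j : ℕ | j ≠ k}, MeasurableSpace.comap (fun ω => f (T^[j] ω))
        Real.measurableSpace] =ᵐ[μ] 0

/-- The `k`-th iterate (for `k : ℤ`) of an invertible transformation. -/
noncomputable def iterZ {α : Type*} (e : α ≃ α) : ℤ → α → α
  | Int.ofNat n => (⇑e)^[n]
  | Int.negSucc n => (⇑e.symm)^[n + 1]

/-!
Fix `d k > 0` with `∑ d k < 1` and times `n k` so large that `a (n k) < d k / 2`. By almost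
invariance there is `A k ∈ 𝓒` of measure `d k` in which a point stays during its first `n k` steps
with probability at least `d k / 2`. Let `U` be the complement of `⋃ A k`, a set of positive
measure, and `f = 1_U g`. Conditionally on `𝓒` the values `f ∘ T^k` are centred and independent, so
`f` is a strong martingale difference; but `S_{n k}(f)` vanishes as long as the orbit stays in
`A k`, so it has an atom of mass at least `a (n k)` at `0`. An atom of mass `c` keeps a distribution
function at uniform distance at least `c / 2` from any continuous one.
-/

section AtomsAndCDF

variable (ν ρ : Measure ℝ)

lemma bddAbove_range_abs_cdf_sub_cdf : BddAbove (range fun x => |cdf ν x - cdf ρ x|) := by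
  refine ⟨1, forall_mem_range.2 fun x => abs_sub_le_iff.2 ⟨?_, ?_⟩⟩
  · linarith [cdf_le_one ν x, cdf_nonneg ρ x]
  · linarith [cdf_le_one ρ x, cdf_nonneg ν x]

variable [IsProbabilityMeasure ν] [IsProbabilityMeasure ρ]

lemma measureReal_singleton_eq_cdf_sub_leftLim (x : ℝ) :
    ν.real {x} = cdf ν x - Function.leftLim (cdf ν) x := by
  conv_lhs => rw [← measure_cdf ν]
  rw [measureReal_def, StieltjesFunction.measure_singleton,
    ENNReal.toReal_ofReal (sub_nonneg.2 ((monotone_cdf ν).leftLim_le le_rfl))]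

lemma abs_measureReal_singleton_sub_le_two_mul_iSup_abs_cdf_sub (x : ℝ) :
    |ν.real {x} - ρ.real {x}| ≤ 2 * ⨆ y, |cdf ν y - cdf ρ y| := by
  have hle : ∀ y, |cdf ν y - cdf ρ y| ≤ ⨆ y, |cdf ν y - cdf ρ y| :=
    le_ciSup (bddAbove_range_abs_cdf_sub_cdf ν ρ)
  have hleft : |Function.leftLim (cdf ν) x - Function.leftLim (cdf ρ) x| ≤
      ⨆ y, |cdf ν y - cdf ρ y| :=
    le_of_tendsto (((monotone_cdf ν).tendsto_leftLim x).sub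
      ((monotone_cdf ρ).tendsto_leftLim x)).abs (.of_forall hle)
  calc |ν.real {x} - ρ.real {x}|
      = |(cdf ν x - cdf ρ x) - (Function.leftLim (cdf ν) x - Function.leftLim (cdf ρ) x)| := by
        rw [measureReal_singleton_eq_cdf_sub_leftLim, measureReal_singleton_eq_cdf_sub_leftLim]
        ring_nf
    _ ≤ |cdf ν x - cdf ρ x| + |Function.leftLim (cdf ν) x - Function.leftLim (cdf ρ) x| :=
        abs_sub _ _
    _ ≤ 2 * ⨆ y, |cdf ν y - cdf ρ y| := by linarith [hle x]

end AtomsAndCDF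

lemma stdNormalCDF_eq_cdf_gaussianReal : stdNormalCDF = cdf (gaussianReal 0 1) := by
  funext x
  rw [cdf_eq_real, measureReal_def, gaussianReal_apply_eq_integral 0 one_ne_zero,
    ENNReal.toReal_ofReal (integral_nonneg (gaussianPDFReal_nonneg 0 1)), stdNormalCDF,
    ← integral_const_mul]
  simp [gaussianPDFReal]

section PartialSums

variable {Ω : Type*} {mΩ : MeasurableSpace Ω} {μ : Measure Ω} {T : Ω → Ω} {f : Ω → ℝ} {n : ℕ}

lemma measurable_partialSumMDS (hT : Measurable T) (hf : Measurable f) :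
    Measurable (partialSumMDS T f n) :=
  Finset.measurable_sum _ fun k _ => hf.comp (hT.iterate k)

lemma Fdist_eq_cdf_map [IsProbabilityMeasure μ] (hT : Measurable T) (hf : Measurable f)
    (hscale : 0 < √(∫ ω, f ω ^ 2 ∂μ) * √n) :
    Fdist μ T f n =
      cdf (μ.map fun ω => partialSumMDS T f n ω / (√(∫ ω, f ω ^ 2 ∂μ) * √n)) := by
  have hS := (measurable_partialSumMDS (n := n) hT hf).div_const (√(∫ ω, f ω ^ 2 ∂μ) * √n)
  have := Measure.isProbabilityMeasure_map (μ := μ) hS.aemeasurable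
  funext x
  rw [cdf_eq_real, map_measureReal_apply hS measurableSet_Iic, Fdist, measureReal_def]
  simp only [preimage, mem_Iic, div_le_iff₀ hscale, mul_assoc]

lemma half_measureReal_partialSumMDS_eq_zero_le_iSup_abs_Fdist_sub [IsProbabilityMeasure μ]
    (hT : Measurable T) (hf : Measurable f) (hσ : 0 < ∫ ω, f ω ^ 2 ∂μ) (hn : 0 < n) :
    μ.real {ω | partialSumMDS T f n ω = 0} / 2 ≤
      ⨆ x, |Fdist μ T f n x - stdNormalCDF x| := by
  have hscale : 0 < √(∫ ω, f ω ^ 2 ∂μ) * √n := by positivity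
  have hS := (measurable_partialSumMDS (n := n) hT hf).div_const (√(∫ ω, f ω ^ 2 ∂μ) * √n)
  have := Measure.isProbabilityMeasure_map (μ := μ) hS.aemeasurable
  have hatom : (μ.map fun ω => partialSumMDS T f n ω / (√(∫ ω, f ω ^ 2 ∂μ) * √n)).real {0} =
      μ.real {ω | partialSumMDS T f n ω = 0} := by
    rw [map_measureReal_apply hS (measurableSet_singleton 0)]
    simp only [preimage, mem_singleton_iff, div_eq_zero_iff, hscale.ne', or_false]
  have hnormal : (gaussianReal 0 1).real {0} = 0 := by
    have := nullSingletonClass_gaussianReal (μ := 0) one_ne_zero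
    rw [measureReal_def, measure_singleton, ENNReal.toReal_zero]
  have hjump := abs_measureReal_singleton_sub_le_two_mul_iSup_abs_cdf_sub
    (μ.map fun ω => partialSumMDS T f n ω / (√(∫ ω, f ω ^ 2 ∂μ) * √n)) (gaussianReal 0 1) 0
  rw [hatom, hnormal, sub_zero, abs_of_nonneg measureReal_nonneg, ← Fdist_eq_cdf_map hT hf hscale,
    ← stdNormalCDF_eq_cdf_gaussianReal] at hjump
  linarith

lemma partialSumMDS_indicator_eq_zero {U : Set Ω} {ω : Ω} (h : ∀ j < n, T^[j] ω ∉ U) :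
    partialSumMDS T (U.indicator f) n ω = 0 :=
  Finset.sum_eq_zero fun j hj => indicator_of_notMem (h j (Finset.mem_range.1 hj)) f

end PartialSums

section Independence

variable {Ω ι : Type*}

lemma isPiSystem_image2_inter {s t : Set (Set Ω)} (hs : IsPiSystem s) (ht : IsPiSystem t) :
    IsPiSystem (image2 (· ∩ ·) s t) := by
  rintro _ ⟨a, ha, b, hb, rfl⟩ _ ⟨a', ha', b', hb', rfl⟩ hne
  rw [inter_inter_inter_comm] at hne ⊢
  exact mem_image2_of_mem (hs a ha a' ha' hne.left) (ht b hb b' hb' hne.right)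

lemma sup_eq_generateFrom_image2_inter (m₁ m₂ : MeasurableSpace Ω) :
    m₁ ⊔ m₂ = MeasurableSpace.generateFrom
      (image2 (· ∩ ·) {s | MeasurableSet[m₁] s} {s | MeasurableSet[m₂] s}) := by
  refine le_antisymm (sup_le (fun s hs => ?_) fun t ht => ?_) (MeasurableSpace.generateFrom_le ?_)
  · exact MeasurableSpace.measurableSet_generateFrom ⟨s, hs, univ, .univ, inter_univ s⟩
  · exact MeasurableSpace.measurableSet_generateFrom ⟨univ, .univ, t, ht, univ_inter t⟩
  · rintro _ ⟨s, hs, t, ht, rfl⟩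
    exact MeasurableSet.inter (le_sup_left (a := m₁) (b := m₂) s hs)
      (le_sup_right (a := m₁) (b := m₂) t ht)

variable {m₁ m₂ m₃ C mΩ : MeasurableSpace Ω} {μ : Measure Ω} [IsProbabilityMeasure μ]

lemma indep_sup_right_of_indep_sup_left (h₁ : m₁ ≤ mΩ) (h₂ : m₂ ≤ mΩ) (h₃ : m₃ ≤ mΩ)
    (h₁₂ : Indep m₁ m₂ μ) (h : Indep (m₁ ⊔ m₂) m₃ μ) : Indep m₁ (m₂ ⊔ m₃) μ := by
  refine IndepSets.indep h₁ (sup_le h₂ h₃) (@MeasurableSpace.isPiSystem_measurableSet Ω m₁)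
    (isPiSystem_image2_inter (@MeasurableSpace.isPiSystem_measurableSet Ω m₂)
      (@MeasurableSpace.isPiSystem_measurableSet Ω m₃))
    (@MeasurableSpace.generateFrom_measurableSet Ω m₁).symm
    (sup_eq_generateFrom_image2_inter m₂ m₃) ?_
  rw [IndepSets_iff]
  rintro r _ hr ⟨s, hs, t, ht, rfl⟩
  have hr' : MeasurableSet[m₁ ⊔ m₂] r := le_sup_left (a := m₁) r hr
  have hs' : MeasurableSet[m₁ ⊔ m₂] s := le_sup_right (a := m₁) s hs
  rw [Indep_iff] at h h₁₂
  calc μ (r ∩ (s ∩ t)) = μ (r ∩ s ∩ t) := by rw [inter_assoc]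
    _ = μ r * μ s * μ t := by rw [h _ _ (hr'.inter hs') ht, h₁₂ _ _ hr hs]
    _ = μ r * μ (s ∩ t) := by rw [h _ _ hs' ht, mul_assoc]

lemma condExp_indicator_ae_eq_zero_of_indep (h₁ : m₁ ≤ mΩ) (h₂ : m₂ ≤ mΩ) (h₃₂ : m₃ ≤ m₂)
    (h : Indep m₁ m₂ μ) {X : Ω → ℝ} (hX : Measurable[m₁] X) (hXi : Integrable X μ)
    (hX0 : ∫ ω, X ω ∂μ = 0) {A : Set Ω} (hA : MeasurableSet[m₂] A) :
    μ[A.indicator X | m₃] =ᵐ[μ] 0 := by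
  have hfiner : μ[A.indicator X | m₂] =ᵐ[μ] 0 := by
    filter_upwards [condExp_indicator hXi hA,
      condExp_indep_eq h₁ h₂ hX.stronglyMeasurable h] with ω hind hconst
    rw [hind]
    by_cases hω : ω ∈ A <;> simp [hω, hconst, hX0]
  calc μ[A.indicator X | m₃] =ᵐ[μ] μ[μ[A.indicator X | m₂] | m₃] :=
        (condExp_condExp_of_le h₃₂ h₂).symm
    _ =ᵐ[μ] μ[(0 : Ω → ℝ) | m₃] := condExp_congr_ae hfiner
    _ = 0 := condExp_zero

lemma indep_comap_iSup_ne_sup {X : ι → Ω → ℝ} (hC : C ≤ mΩ) (hX : ∀ i, Measurable (X i))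
    (hindep : iIndepFun X μ)
    (hXC : Indep (⨆ i, MeasurableSpace.comap (X i) inferInstance) C μ) (k : ι) :
    Indep (MeasurableSpace.comap (X k) inferInstance)
      ((⨆ j ∈ {j | j ≠ k}, MeasurableSpace.comap (X j) inferInstance) ⊔ C) μ := by
  have hle := fun i => (hX i).comap_le
  have hothers : Indep (MeasurableSpace.comap (X k) inferInstance)
      (⨆ j ∈ {j | j ≠ k}, MeasurableSpace.comap (X j) inferInstance) μ := by
    have := indep_iSup_of_disjoint hle hindep.iIndep (disjoint_compl_right (a := {k}))
    rwa [iSup_singleton] at this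
  exact indep_sup_right_of_indep_sup_left (hle k) (iSup₂_le fun j _ => hle j) hC hothers
    (indep_of_indep_of_le_left hXC
      (sup_le (le_iSup_of_le k le_rfl) (iSup₂_le fun j _ => le_iSup_of_le j le_rfl)))

lemma condExp_indicator_iSup_ne_ae_eq_zero {X : ι → Ω → ℝ} {A : ι → Set Ω} (hC : C ≤ mΩ)
    (hX : ∀ i, Measurable (X i)) (hindep : iIndepFun X μ)
    (hXC : Indep (⨆ i, MeasurableSpace.comap (X i) inferInstance) C μ)
    (hA : ∀ i, MeasurableSet[C] (A i)) {k : ι} (hXi : Integrable (X k) μ)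
    (hX0 : ∫ ω, X k ω ∂μ = 0) :
    μ[(A k).indicator (X k) |
      ⨆ j ∈ {j | j ≠ k}, MeasurableSpace.comap ((A j).indicator (X j)) inferInstance] =ᵐ[μ] 0 := by
  refine condExp_indicator_ae_eq_zero_of_indep (hX k).comap_le
    (sup_le (iSup₂_le fun j _ => (hX j).comap_le) hC) (iSup₂_le fun j hj => ?_)
    (indep_comap_iSup_ne_sup hC hX hindep hXC k) (comap_measurable (X k)) hXi hX0
    (le_sup_right (b := C) _ (hA k))
  have hXj : Measurable[(⨆ j ∈ {j | j ≠ k}, MeasurableSpace.comap (X j) inferInstance) ⊔ C]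
      (X j) :=
    (comap_measurable (X j)).mono (le_sup_of_le_left (le_iSup₂_of_le j hj le_rfl)) le_rfl
  exact (hXj.indicator (le_sup_right (b := C) _ (hA j))).comap_le

lemma isStrongMDS_indicator {T : Ω → Ω} (hT : MeasurePreserving T μ μ) (hC : C ≤ mΩ)
    (hTC : Measurable[C, C] T) {g : Ω → ℝ} (hg : Measurable g) (hgi : Integrable g μ)
    (hg0 : ∫ ω, g ω ∂μ = 0) (hindep : iIndepFun (fun k : ℕ => g ∘ T^[k]) μ)
    (hgC : Indep (⨆ k : ℕ, MeasurableSpace.comap (g ∘ T^[k]) inferInstance) C μ)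
    {U : Set Ω} (hU : MeasurableSet[C] U) : IsStrongMDS μ T (U.indicator g) := fun k =>
  condExp_indicator_iSup_ne_ae_eq_zero (A := fun j : ℕ => T^[j] ⁻¹' U) hC
    (fun j => hg.comp (hT.measurable.iterate j)) hindep hgC
    (fun j => (@Measurable.iterate Ω C T hTC j) hU)
    ((hT.iterate k).integrable_comp_of_integrable hgi)
    (((hT.iterate k).hasLaw.integral_comp hg.aestronglyMeasurable).trans hg0)

end Independence

section AlmostInvariance

/-- The σ-algebra `C` contains sets of every measure `d ∈ (0, 1)` that are invariant under finitely
many iterates of `T` up to an arbitrarily small proportion of `d`; this is what makes orbits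
stay for a long time in a small set. -/
def HasAlmostInvariantSets {Ω : Type*} (C : MeasurableSpace Ω) {_ : MeasurableSpace Ω}
    (μ : Measure Ω) (T : Ω → Ω) : Prop :=
  ∀ ε : ℝ, 0 < ε → ∀ N : ℕ, ∀ d : ℝ, d ∈ Ioo (0 : ℝ) 1 →
    ∃ A : Set Ω, MeasurableSet[C] A ∧ μ A = ENNReal.ofReal d ∧
      ∀ n : ℕ, 1 ≤ n → n ≤ N → μ (symmDiff A (T^[n] ⁻¹' A)) < ENNReal.ofReal (ε * d)

variable {Ω ι : Type*} {C mΩ : MeasurableSpace Ω} {μ : Measure Ω} {T : Ω → Ω}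

lemma measure_le_measure_biInter_add_sum_sdiff (s : Finset ι) (A : Set Ω) (B : ι → Set Ω) :
    μ A ≤ μ (⋂ i ∈ s, B i) + ∑ i ∈ s, μ (A \ B i) := by
  have hcover : A ⊆ (⋂ i ∈ s, B i) ∪ ⋃ i ∈ s, A \ B i := by
    rw [← sdiff_subset_iff]
    simp only [sdiff_iInter, subset_rfl]
  calc μ A ≤ μ (⋂ i ∈ s, B i) + μ (⋃ i ∈ s, A \ B i) :=
        (measure_mono hcover).trans (measure_union_le _ _)
    _ ≤ μ (⋂ i ∈ s, B i) + ∑ i ∈ s, μ (A \ B i) := by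
        gcongr
        exact measure_biUnion_finset_le s _

lemma measure_le_measure_forall_iterate_mem_add {A : Set Ω} {N : ℕ} {δ : ℝ≥0∞}
    (h : ∀ j, 1 ≤ j → j ≤ N → μ (symmDiff A (T^[j] ⁻¹' A)) ≤ δ) :
    μ A ≤ μ {ω | ∀ j < N, T^[j] ω ∈ A} + N * δ := by
  have hleave : ∀ j ∈ Finset.range N, μ (A \ T^[j] ⁻¹' A) ≤ δ := fun j hj => by
    rcases Nat.eq_zero_or_pos j with rfl | hpos
    · simp
    · exact (measure_mono subset_union_left).trans (h j hpos (Finset.mem_range.1 hj).le)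
  calc μ A ≤ μ (⋂ j ∈ Finset.range N, T^[j] ⁻¹' A) + ∑ j ∈ Finset.range N, μ (A \ T^[j] ⁻¹' A) :=
        measure_le_measure_biInter_add_sum_sdiff _ _ _
    _ ≤ μ (⋂ j ∈ Finset.range N, T^[j] ⁻¹' A) + N * δ := by
        gcongr
        simpa using Finset.sum_le_card_nsmul _ _ δ hleave
    _ = μ {ω | ∀ j < N, T^[j] ω ∈ A} + N * δ := by
        congr 2
        ext ω
        simp

namespace HasAlmostInvariantSets

lemma exists_half_le_measure_forall_iterate_mem (h : HasAlmostInvariantSets C μ T) {d : ℝ}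
    (hd : d ∈ Ioo (0 : ℝ) 1) {N : ℕ} (hN : 0 < N) :
    ∃ A, MeasurableSet[C] A ∧ μ A = ENNReal.ofReal d ∧
      ENNReal.ofReal (d / 2) ≤ μ {ω | ∀ j < N, T^[j] ω ∈ A} := by
  obtain ⟨A, hAC, hAd, hA⟩ := h (1 / (2 * N)) (by positivity) N d hd
  refine ⟨A, hAC, hAd, ?_⟩
  have hloss : (N : ℝ≥0∞) * ENNReal.ofReal (1 / (2 * N) * d) = ENNReal.ofReal (d / 2) := by
    rw [← ENNReal.ofReal_natCast, ← ENNReal.ofReal_mul N.cast_nonneg]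
    congr 1
    field_simp
  have hstay := measure_le_measure_forall_iterate_mem_add fun j h₁ h₂ => (hA j h₁ h₂).le
  rw [hAd, hloss, ← add_halves d, ENNReal.ofReal_add (half_pos hd.1).le (half_pos hd.1).le,
    add_halves] at hstay
  exact (ENNReal.add_le_add_iff_right ENNReal.ofReal_ne_top).1 hstay

lemma exists_measure_forall_iterate_notMem_ge [IsProbabilityMeasure μ]
    (h : HasAlmostInvariantSets C μ T) (hC : C ≤ mΩ) {a : ℕ → ℝ}
    (ha : Filter.Tendsto a Filter.atTop (nhds 0)) :
    ∃ U, MeasurableSet[C] U ∧ μ U ≠ 0 ∧ ∃ n : ℕ → ℕ, StrictMono n ∧ (∀ k, 0 < n k) ∧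
      ∀ k, ENNReal.ofReal (a (n k)) ≤ μ {ω | ∀ j < n k, T^[j] ω ∉ U} := by
  obtain ⟨d, hd_pos, hd_sum⟩ := ENNReal.exists_pos_sum_of_countable one_ne_zero ℕ
  have hd : ∀ k, (d k : ℝ) ∈ Ioo (0 : ℝ) 1 := fun k =>
    ⟨hd_pos k, by exact_mod_cast (ENNReal.le_tsum k).trans_lt hd_sum⟩
  obtain ⟨n, hn_mono, hn⟩ : ∃ n : ℕ → ℕ, StrictMono n ∧ ∀ k, 0 < n k ∧ a (n k) < d k / 2 :=
    Filter.extraction_forall_of_eventually' fun k => ((Filter.eventually_gt_atTop 0).and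
      (ha.eventually_lt_const (half_pos (hd k).1))).exists_forall_of_atTop
  choose A hAC hAd hAstay using fun k => h.exists_half_le_measure_forall_iterate_mem (hd k) (hn k).1
  have hAU : μ (⋃ k, A k) < 1 := by
    refine (measure_iUnion_le A).trans_lt ?_
    simpa only [hAd, ENNReal.ofReal_coe_nnreal] using hd_sum
  refine ⟨(⋃ k, A k)ᶜ, (MeasurableSet.iUnion hAC).compl, ?_, n, hn_mono, fun k => (hn k).1,
    fun k => ?_⟩
  · rw [Ne, prob_compl_eq_zero_iff (hC _ (MeasurableSet.iUnion hAC))]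
    exact hAU.ne
  · calc ENNReal.ofReal (a (n k)) ≤ ENNReal.ofReal (d k / 2) := ENNReal.ofReal_le_ofReal (hn k).2.le
      _ ≤ μ {ω | ∀ j < n k, T^[j] ω ∈ A k} := hAstay k
      _ ≤ μ {ω | ∀ j < n k, T^[j] ω ∉ (⋃ k, A k)ᶜ} :=
        measure_mono fun ω hω j hj => not_not.2 (mem_iUnion.2 ⟨k, hω j hj⟩)

end HasAlmostInvariantSets

end AlmostInvariance

section Moments

variable {Ω : Type*} {C mΩ : MeasurableSpace Ω} {μ : Measure Ω} {g : Ω → ℝ}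

lemma integral_sq_pos (hg : MemLp g 2 μ) (hne : ¬ g =ᵐ[μ] 0) : 0 < ∫ ω, g ω ^ 2 ∂μ := by
  refine (integral_nonneg fun ω => sq_nonneg (g ω)).lt_of_ne fun h => hne ?_
  filter_upwards [(integral_eq_zero_iff_of_nonneg (fun ω => sq_nonneg (g ω))
    hg.integrable_sq).1 h.symm] with ω hω
  exact pow_eq_zero_iff two_ne_zero |>.1 hω

lemma not_ae_eq_const_of_integral_eq_zero [IsProbabilityMeasure μ] (h₀ : ∫ ω, g ω ∂μ = 0)
    (hpos : 0 < ∫ ω, g ω ^ 2 ∂μ) : ¬ ∃ c : ℝ, g =ᵐ[μ] fun _ => c := by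
  rintro ⟨c, hc⟩
  have hc0 : c = 0 := by simpa [integral_congr_ae hc] using h₀
  have hsq : (fun ω => g ω ^ 2) =ᵐ[μ] 0 := by
    filter_upwards [hc] with ω hω
    simp [hω, hc0]
  exact hpos.ne' (integral_eq_zero_of_ae hsq)

lemma integral_comp_indicator_eq_mul (hC : C ≤ mΩ) (hg : Measurable g)
    (hgC : Indep C (MeasurableSpace.comap g inferInstance) μ) {U : Set Ω}
    (hU : MeasurableSet[C] U) {φ : ℝ → ℝ} (hφ : Measurable φ) (hφ0 : φ 0 = 0) :
    ∫ ω, φ (U.indicator g ω) ∂μ = μ.real U * ∫ ω, φ (g ω) ∂μ := by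
  rw [← hgC.setIntegral_eq_mul hC hg.aemeasurable hU hφ.aestronglyMeasurable,
    ← integral_indicator (hC U hU)]
  exact integral_congr_ae (.of_forall fun ω => congrFun (indicator_comp_of_zero hφ0).symm ω)

lemma memLp_of_forall_mem_neg_one_zero_one [IsFiniteMeasure μ] (hg : Measurable g)
    (hval : ∀ ω, g ω ∈ ({-1, 0, 1} : Set ℝ)) (p : ℝ≥0∞) : MemLp g p μ :=
  .of_bound hg.aestronglyMeasurable 1 (.of_forall fun ω => by
    rcases hval ω with h | h | h <;> rw [h] <;> norm_num)

lemma integral_eq_measureReal_sub_of_forall_mem [IsFiniteMeasure μ] (hg : Measurable g)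
    (hval : ∀ ω, g ω ∈ ({-1, 0, 1} : Set ℝ)) :
    ∫ ω, g ω ∂μ = μ.real {ω | g ω = 1} - μ.real {ω | g ω = -1} := by
  have hmeas : ∀ c, MeasurableSet {ω | g ω = c} := fun c => hg (measurableSet_singleton c)
  have hint : ∀ c, Integrable ({ω | g ω = c}.indicator (1 : Ω → ℝ)) μ := fun c =>
    (integrable_const 1).indicator (hmeas c)
  calc ∫ ω, g ω ∂μ
      = ∫ ω, ({ω | g ω = 1}.indicator 1 ω - {ω | g ω = -1}.indicator 1 ω) ∂μ := by
        congr with ω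
        obtain h | h | h : g ω = -1 ∨ g ω = 0 ∨ g ω = 1 := by simpa using hval ω
        all_goals norm_num [indicator_apply, h]
    _ = μ.real {ω | g ω = 1} - μ.real {ω | g ω = -1} := by
        rw [integral_sub (hint 1) (hint (-1)), integral_indicator_one (hmeas 1),
          integral_indicator_one (hmeas (-1))]

end Moments

theorem stmt1_general {Ω : Type*} {C mΩ : MeasurableSpace Ω} {μ : Measure Ω}
    [IsProbabilityMeasure μ] {T : Ω → Ω} (hT : MeasurePreserving T μ μ) (hC : C ≤ mΩ)
    (hTC : Measurable[C, C] T) (hinv : HasAlmostInvariantSets C μ T)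
    {g : Ω → ℝ} (hg : Measurable g) (hg2 : MemLp g 2 μ) (hg0 : ∫ ω, g ω ∂μ = 0)
    (hgne : ¬ g =ᵐ[μ] 0) (hindep : iIndepFun (fun k : ℕ => g ∘ T^[k]) μ)
    (hgC : Indep (⨆ k : ℕ, MeasurableSpace.comap (g ∘ T^[k]) inferInstance) C μ)
    {a : ℕ → ℝ} (ha : Filter.Tendsto a Filter.atTop (nhds 0)) :
    ∃ U, MeasurableSet[C] U ∧ (¬ ∃ c : ℝ, U.indicator g =ᵐ[μ] fun _ => c) ∧
      IsStrongMDS μ T (U.indicator g) ∧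
      ∃ n : ℕ → ℕ, StrictMono n ∧ (∀ k, 0 < n k) ∧ ∀ k,
        ENNReal.ofReal (a (n k)) ≤ μ {ω | partialSumMDS T (U.indicator g) (n k) ω = 0} ∧
        a (n k) / 2 ≤ ⨆ x, |Fdist μ T (U.indicator g) (n k) x - stdNormalCDF x| := by
  obtain ⟨U, hU, hU0, n, hn_mono, hn_pos, hn⟩ := hinv.exists_measure_forall_iterate_notMem_ge hC ha
  have hCg : Indep C (MeasurableSpace.comap g inferInstance) μ :=
    (indep_of_indep_of_le_left hgC
      (le_iSup (fun k : ℕ => MeasurableSpace.comap (g ∘ T^[k]) inferInstance) 0)).symm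
  have hmean : ∫ ω, U.indicator g ω ∂μ = 0 :=
    (integral_comp_indicator_eq_mul hC hg hCg hU measurable_id rfl).trans (by simp [hg0])
  have hvar : 0 < ∫ ω, U.indicator g ω ^ 2 ∂μ := by
    rw [integral_comp_indicator_eq_mul hC hg hCg hU (φ := (· ^ 2)) (by fun_prop) (by simp)]
    exact mul_pos (ENNReal.toReal_pos hU0 (measure_ne_top μ U)) (integral_sq_pos hg2 hgne)
  have hatom : ∀ k, ENNReal.ofReal (a (n k)) ≤
      μ {ω | partialSumMDS T (U.indicator g) (n k) ω = 0} := fun k =>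
    (hn k).trans (measure_mono fun _ => partialSumMDS_indicator_eq_zero)
  refine ⟨U, hU, not_ae_eq_const_of_integral_eq_zero hmean hvar,
    isStrongMDS_indicator hT hC hTC hg (hg2.integrable one_le_two) hg0 hindep hgC hU,
    n, hn_mono, hn_pos, fun k => ⟨hatom k, le_trans ?_
      (half_measureReal_partialSumMDS_eq_zero_le_iSup_abs_Fdist_sub hT.measurable
        (hg.indicator (hC U hU)) hvar (hn_pos k))⟩⟩
  gcongr
  exact (ENNReal.ofReal_le_iff_le_toReal (measure_ne_top _ _)).1 (hatom k)

/-- Let `T` be an invertible bimeasurable measure-preserving transformation of `(Ω,𝓕,μ)`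
admitting independent sub-σ-algebras `𝓑`, `𝓒` with `𝓒` `T`-invariant, a `𝓑`-measurable
`g : Ω → {-1,0,1}` with `μ(g=1) = μ(g=-1) = a/2` whose orbit `(g∘T^k)_{k∈ℤ}` is i.i.d. and
independent of `𝓒`, and such that `𝓒` contains almost invariant sets of any prescribed
measure `d ∈ (0,1)`. Then for every sequence `(a_n)` of positive reals decreasing to `0`
there is a non-degenerate `{-1,0,1}`-valued strong martingale difference `f` and a strictly
increasing sequence `(n_k)` of positive integers with `μ(S_{n_k}(f) = 0) ≥ a_{n_k}` and
`sup_x |F_{n_k}(f,x) − Φ(x)| ≥ a_{n_k}/2`. -/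
theorem stmt1 {Ω : Type*} [mΩ : MeasurableSpace Ω] (μ : Measure Ω) [IsProbabilityMeasure μ]
    (T : Ω ≃ Ω) (hTmeas : Measurable (⇑T)) (hTmeas' : Measurable (⇑T.symm))
    (hT : MeasurePreserving (⇑T) μ μ)
    (B C : MeasurableSpace Ω) (hB : B ≤ mΩ) (hC : C ≤ mΩ)
    -- (i) 𝓑 and 𝓒 are independent
    (hBC : Indep B C μ)
    -- (ii) 𝓒 is T-invariant
    (hCinv : ∀ A : Set Ω, MeasurableSet[C] A ↔ MeasurableSet[C] ((⇑T) ⁻¹' A))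
    -- (iii) a 𝓑-measurable g with i.i.d. orbit independent of 𝓒
    (g : Ω → ℝ) (hgB : Measurable[B] g) (hgval : ∀ ω, g ω ∈ ({-1, 0, 1} : Set ℝ))
    (a0 : ℝ) (ha0 : 0 < a0) (ha0' : a0 ≤ 1)
    (hg1 : μ {ω | g ω = 1} = ENNReal.ofReal (a0 / 2))
    (hg1' : μ {ω | g ω = -1} = ENNReal.ofReal (a0 / 2))
    (hgindep : iIndep (fun k : ℤ =>
      MeasurableSpace.comap (fun ω => g (iterZ T k ω)) Real.measurableSpace) μ)
    (hgid : ∀ k : ℤ, ∀ s : Set ℝ, MeasurableSet s →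
      μ ((fun ω => g (iterZ T k ω)) ⁻¹' s) = μ (g ⁻¹' s))
    (hgC : Indep (⨆ k : ℤ,
      MeasurableSpace.comap (fun ω => g (iterZ T k ω)) Real.measurableSpace) C μ)
    -- (iv) 𝓒 contains almost invariant sets of any measure d ∈ (0,1)
    (hRokhlin : ∀ ε : ℝ, 0 < ε → ∀ N : ℕ, ∀ d : ℝ, d ∈ Set.Ioo (0 : ℝ) 1 →
      ∃ A : Set Ω, MeasurableSet[C] A ∧ μ A = ENNReal.ofReal d ∧
        ∀ n : ℕ, 1 ≤ n → n ≤ N →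
          μ (symmDiff A ((⇑T)^[n] ⁻¹' A)) < ENNReal.ofReal (ε * d))
    (a : ℕ → ℝ) (ha_pos : ∀ n, 0 < a n) (ha_anti : Antitone a)
    (ha_lim : Filter.Tendsto a Filter.atTop (nhds 0)) :
    ∃ f : Ω → ℝ, Measurable[mΩ] f ∧ (∀ ω, f ω ∈ ({-1, 0, 1} : Set ℝ)) ∧
      (¬ ∃ c : ℝ, f =ᵐ[μ] fun _ => c) ∧
      @IsStrongMDS Ω mΩ μ (⇑T) f ∧
      ∃ n : ℕ → ℕ, StrictMono n ∧ (∀ k, 0 < n k) ∧ ∀ k : ℕ,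
        ENNReal.ofReal (a (n k)) ≤ μ {ω | partialSumMDS (⇑T) f (n k) ω = 0} ∧
        a (n k) / 2 ≤ ⨆ x : ℝ, |@Fdist Ω mΩ μ (⇑T) f (n k) x - stdNormalCDF x| := by
  have hg : Measurable[mΩ] g := hgB.mono hB le_rfl
  have hg0 : ∫ ω, g ω ∂μ = 0 := by
    rw [integral_eq_measureReal_sub_of_forall_mem hg hgval, measureReal_def, measureReal_def,
      hg1, hg1', sub_self]
  have hgne : ¬ g =ᵐ[μ] 0 := fun h => by
    have hg1_zero : μ {ω | g ω = 1} = 0 :=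
      measure_mono_null (fun ω (hω : g ω = 1) => by simp [hω]) (ae_iff.1 h)
    exact (ENNReal.ofReal_pos.2 (half_pos ha0)).ne' (hg1.symm.trans hg1_zero)
  obtain ⟨U, hU, hconst, hmds, hn⟩ := stmt1_general hT hC (fun A => (hCinv A).1) hRokhlin hg
    (memLp_of_forall_mem_neg_one_zero_one hg hgval 2) hg0 hgne
    ((iIndepFun_iff_iIndep _ _ _).2 (hgindep.precomp (g := Int.ofNat) fun _ _ => Int.ofNat.inj))
    (indep_of_indep_of_le_left hgC (iSup_le fun k : ℕ => le_iSup_of_le (k : ℤ) le_rfl)) ha_lim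
  refine ⟨U.indicator g, hg.indicator (hC U hU), fun ω => ?_, hconst, hmds, hn⟩
  rcases indicator_eq_zero_or_self U g ω with h | h <;> rw [h]
  · simp
  · exact hgval ω
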